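/- arXiv:2002.05394 — 9 statements merged into one kernel-verified Lean document; each statement's English description precedes it below -/
import Mathlib

section
/- There exists a star-algebra homomorphism π : A → B(ℓ²(G,H)) satisfying (π(a) ξ)(s) = u(α(s⁻¹)(a))(ξ(s)) for all a ∈ A, ξ ∈ ℓ²(G,H) and s ∈ G. Moreover ‖π(a)‖ ≤ ‖a‖ for all a ∈ A, and if u is injective then π is isometric: ‖π(a)‖ = ‖a‖ for all a ∈ A. -/
theorem stmt_2 {G : Type*} [Group G] {H : Type*} [NormedAddCommGroup H]
    [InnerProductSpace ℂ H] [CompleteSpace H]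
    {A : Type*} [NormedRing A] [StarRing A] [CStarRing A] [NormedAlgebra ℂ A]
    [StarModule ℂ A] [CompleteSpace A]
    (u : A →⋆ₐ[ℂ] (H →L[ℂ] H)) (α : G → (A ≃⋆ₐ[ℂ] A))
    (hα : ∀ (g h : G) (a : A), α (g * h) a = α g (α h a)) :
    ∃ π : A →⋆ₐ[ℂ] ((lp (fun _ : G => H) 2) →L[ℂ] (lp (fun _ : G => H) 2)),
      (∀ (a : A) (ξ : lp (fun _ : G => H) 2) (s : G),
          (π a ξ : ∀ _ : G, H) s = u (α s⁻¹ a) (ξ s)) ∧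
      (∀ a : A, ‖π a‖ ≤ ‖a‖) ∧
      (Function.Injective u → ∀ a : A, ‖π a‖ = ‖a‖) := by
  letI : CStarAlgebra A := {}
  have hp : 0 < (2 : ENNReal).toReal := by norm_num
  have hb : ∀ (a : A) (s : G) (x : H), ‖u (α s⁻¹ a) x‖ ≤ ‖a‖ * ‖x‖ := by
    intro a s x
    have h1 : ‖u (α s⁻¹ a)‖ ≤ ‖α s⁻¹ a‖ := NonUnitalStarAlgHom.norm_apply_le u _
    have h2 : ‖α s⁻¹ a‖ = ‖a‖ := StarAlgEquiv.norm_map (α s⁻¹) a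
    exact (ContinuousLinearMap.le_opNorm _ _).trans
      (mul_le_mul_of_nonneg_right (h1.trans h2.le) (norm_nonneg _))
  have hm : ∀ (a : A) (ξ : lp (fun _ : G => H) 2),
      Memℓp (fun s => u (α s⁻¹ a) (ξ s)) 2 := by
    intro a ξ
    have h := (lp.memℓp ξ).const_smul ((‖a‖ : ℝ) : ℂ)
    rw [memℓp_gen_iff hp] at h ⊢
    refine Summable.of_nonneg_of_le (fun _ => by positivity) (fun s => ?_) h
    refine Real.rpow_le_rpow (norm_nonneg _) ?_ hp.le
    simpa [norm_smul] using hb a s (ξ s)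
  let T : A → ((lp (fun _ : G => H) 2) →L[ℂ] (lp (fun _ : G => H) 2)) := fun a =>
    LinearMap.mkContinuous
      { toFun := fun ξ => ⟨fun s => u (α s⁻¹ a) (ξ s), hm a ξ⟩
        map_add' := fun ξ η => by
          ext s
          exact map_add (u (α s⁻¹ a)) (ξ s) (η s)
        map_smul' := fun c ξ => by
          ext s
          simp } ‖a‖ (by
        intro ξ
        refine lp.norm_le_of_forall_sum_le hp (by positivity) (fun F => ?_)
        rw [Real.mul_rpow (norm_nonneg _) (norm_nonneg _)]
        refine le_trans ?_ (mul_le_mul_of_nonneg_left (lp.sum_rpow_le_norm_rpow hp ξ F)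
          (by positivity))
        rw [Finset.mul_sum]
        refine Finset.sum_le_sum fun s _ => ?_
        rw [← Real.mul_rpow (norm_nonneg _) (norm_nonneg _)]
        exact Real.rpow_le_rpow (norm_nonneg _) (hb a s (ξ s)) hp.le)
  have hT : ∀ a ξ s, (T a ξ : ∀ _ : G, H) s = u (α s⁻¹ a) (ξ s) := fun a ξ s => rfl
  have h1 : ∀ s, α s 1 = 1 := fun s => map_one (α s)
  let π : A →⋆ₐ[ℂ] ((lp (fun _ : G => H) 2) →L[ℂ] (lp (fun _ : G => H) 2)) :=
    { toFun := T
      map_one' := by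
        ext ξ s
        rw [hT]; simp
      map_mul' := fun a b => by
        ext ξ s
        simp only [ContinuousLinearMap.mul_apply, hT, map_mul]
      map_zero' := by
        ext ξ s
        rw [hT]; simp
      map_add' := fun a b => by
        ext ξ s
        simp [hT]
      commutes' := fun c => by
        ext ξ s
        rw [hT, Algebra.algebraMap_eq_smul_one, Algebra.algebraMap_eq_smul_one, map_smul, map_one]
        simp
      map_star' := fun a => by
        rw [ContinuousLinearMap.star_eq_adjoint, ContinuousLinearMap.eq_adjoint_iff]
        intro ξ η
        rw [lp.inner_eq_tsum, lp.inner_eq_tsum]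
        refine tsum_congr fun s => ?_
        rw [hT, hT, map_star, map_star, ContinuousLinearMap.star_eq_adjoint,
          ContinuousLinearMap.adjoint_inner_left] }
  refine ⟨π, hT, fun a => NonUnitalStarAlgHom.norm_apply_le π a, fun hu a => ?_⟩
  refine NonUnitalStarAlgHom.norm_map π ?_ a
  classical
  intro a b hab
  refine (α (1 : G)⁻¹).injective (hu ?_)
  ext x
  have h := congrArg (fun S => (S (lp.single 2 (1 : G) x) : ∀ _ : G, H) 1) hab
  change (T a _ : ∀ _ : G, H) 1 = (T b _ : ∀ _ : G, H) 1 at h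
  rw [hT, hT, lp.single_apply_self] at h
  exact h
end

section
/- Let G be a group, H a complex Hilbert space, r ∈ G, and d : G → B(H) a family of bounded operators whose norms are bounded above. Then there exists a bounded operator D on ℓ²(G,H) satisfying (D ξ)(p) = d(p)(ξ(r⁻¹ p)) for all ξ ∈ ℓ²(G,H) and p ∈ G, and its norm equals the supremum of the entries: ‖D‖ = ⨆_{p ∈ G} ‖d(p)‖. -/
theorem stmt_6 {G : Type*} [Group G] {H : Type*} [NormedAddCommGroup H]
    [InnerProductSpace ℂ H] [CompleteSpace H]
    (r : G) (d : G → (H →L[ℂ] H))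
    (hd : BddAbove (Set.range fun p : G => ‖d p‖)) :
    ∃ D : lp (fun _ : G => H) 2 →L[ℂ] lp (fun _ : G => H) 2,
      (∀ (ξ : lp (fun _ : G => H) 2) (p : G),
        (D ξ : ∀ _ : G, H) p = d p (ξ (r⁻¹ * p))) ∧
      ‖D‖ = ⨆ p : G, ‖d p‖ := by
  classical
  have h2 : 0 < (2 : ENNReal).toReal := by norm_num
  set C : ℝ := ⨆ p : G, ‖d p‖ with hC
  have hle : ∀ p, ‖d p‖ ≤ C := fun p => le_ciSup hd p
  have hC0 : 0 ≤ C := (norm_nonneg _).trans (hle 1)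
  have key : ∀ (ξ : lp (fun _ : G => H) 2) (s : Finset G),
      ∑ p ∈ s, ‖d p (ξ (r⁻¹ * p))‖ ^ (2 : ENNReal).toReal
        ≤ (C * ‖ξ‖) ^ (2 : ENNReal).toReal := by
    intro ξ s
    calc ∑ p ∈ s, ‖d p (ξ (r⁻¹ * p))‖ ^ (2 : ENNReal).toReal
        ≤ ∑ p ∈ s, C ^ (2 : ENNReal).toReal * ‖ξ (r⁻¹ * p)‖ ^ (2 : ENNReal).toReal := by
          refine Finset.sum_le_sum fun p _ => ?_
          rw [← Real.mul_rpow hC0 (norm_nonneg _)]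
          exact Real.rpow_le_rpow (norm_nonneg _) ((d p).le_of_opNorm_le (hle p) _) h2.le
      _ = C ^ (2 : ENNReal).toReal *
          ∑ q ∈ s.map (Equiv.mulLeft r⁻¹).toEmbedding, ‖ξ q‖ ^ (2 : ENNReal).toReal := by
          rw [Finset.sum_map, Finset.mul_sum]
          rfl
      _ ≤ C ^ (2 : ENNReal).toReal * ‖ξ‖ ^ (2 : ENNReal).toReal := by
          refine mul_le_mul_of_nonneg_left (lp.sum_rpow_le_norm_rpow h2 ξ _) ?_
          exact Real.rpow_nonneg hC0 _
      _ = _ := (Real.mul_rpow hC0 (norm_nonneg _)).symm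
  let L : lp (fun _ : G => H) 2 →ₗ[ℂ] lp (fun _ : G => H) 2 :=
    { toFun := fun ξ => ⟨fun p => d p (ξ (r⁻¹ * p)), memℓp_gen' (key ξ)⟩
      map_add' := by
        intro x y
        apply lp.ext
        funext p
        exact map_add (d p) _ _
      map_smul' := by
        intro c x
        apply lp.ext
        funext p
        exact map_smul (d p) _ _ }
  have hL : ∀ ξ, ‖L ξ‖ ≤ C * ‖ξ‖ := fun ξ =>
    lp.norm_le_of_forall_sum_le h2 (mul_nonneg hC0 (norm_nonneg _)) (key ξ)
  refine ⟨L.mkContinuous C hL, fun ξ p => rfl, le_antisymm (L.mkContinuous_norm_le hC0 hL) ?_⟩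
  refine ciSup_le fun p => ?_
  refine ContinuousLinearMap.opNorm_le_bound _ (norm_nonneg _) fun v => ?_
  let x : lp (fun _ : G => H) 2 := lp.single 2 (r⁻¹ * p) v
  have hx : ‖x‖ = ‖v‖ := lp.norm_single (by norm_num) _ _
  have hv : (L.mkContinuous C hL x : ∀ _ : G, H) p = d p v :=
    congrArg (d p) (lp.single_apply_self (E := fun _ : G => H) 2 (r⁻¹ * p) v)
  rw [← hv, ← hx]
  exact (lp.norm_apply_le_norm (by norm_num) _ p).trans (ContinuousLinearMap.le_opNorm _ _)
end

section
/- Let G be a group, H a complex Hilbert space, F a finite subset of G, and d : G → G → B(H) such that for each r ∈ F the family p ↦ ‖d(r,p)‖ is bounded above. Then there exists a bounded operator T on ℓ²(G,H) satisfying (T ξ)(p) = ∑_{r ∈ F} d(r,p)(ξ(r⁻¹ p)) for all ξ ∈ ℓ²(G,H) and p ∈ G, and ‖T‖ ≤ ∑_{r ∈ F} ⨆_{p ∈ G} ‖d(r,p)‖. -/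
theorem stmt_7_aux {G : Type*} [Group G] {H : Type*} [NormedAddCommGroup H]
    [InnerProductSpace ℂ H] (r : G) (e : G → (H →L[ℂ] H)) (C : ℝ) (hC : 0 ≤ C)
    (he : ∀ p, ‖e p‖ ≤ C) :
    ∃ T : lp (fun _ : G => H) 2 →L[ℂ] lp (fun _ : G => H) 2,
      (∀ (ξ : lp (fun _ : G => H) 2) (p : G),
        (T ξ : ∀ _ : G, H) p = e p (ξ (r⁻¹ * p))) ∧ ‖T‖ ≤ C := by
  have h2 : 0 < (2 : ENNReal).toReal := by simp
  have key : ∀ (ξ : lp (fun _ : G => H) 2) (s : Finset G),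
      ∑ p ∈ s, ‖e p (ξ (r⁻¹ * p))‖ ^ (2 : ENNReal).toReal
        ≤ (C * ‖ξ‖) ^ (2 : ENNReal).toReal := by
    intro ξ s
    have h1 := lp.sum_rpow_le_norm_rpow h2 ξ (s.map (Equiv.mulLeft r⁻¹).toEmbedding)
    rw [Finset.sum_map] at h1
    calc ∑ p ∈ s, ‖e p (ξ (r⁻¹ * p))‖ ^ (2 : ENNReal).toReal
        ≤ ∑ p ∈ s, C ^ (2 : ENNReal).toReal * ‖ξ (r⁻¹ * p)‖ ^ (2 : ENNReal).toReal := by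
          refine Finset.sum_le_sum fun p _ => ?_
          rw [← Real.mul_rpow hC (norm_nonneg _)]
          exact Real.rpow_le_rpow (norm_nonneg _) ((e p).le_of_opNorm_le (he p) _) h2.le
      _ = C ^ (2 : ENNReal).toReal * ∑ p ∈ s, ‖ξ (r⁻¹ * p)‖ ^ (2 : ENNReal).toReal := by
          rw [Finset.mul_sum]
      _ ≤ C ^ (2 : ENNReal).toReal * ‖ξ‖ ^ (2 : ENNReal).toReal :=
          mul_le_mul_of_nonneg_left h1 (Real.rpow_nonneg hC _)
      _ = _ := (Real.mul_rpow hC (norm_nonneg _)).symm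
  let L : lp (fun _ : G => H) 2 →ₗ[ℂ] lp (fun _ : G => H) 2 :=
    { toFun := fun ξ => ⟨fun p => e p (ξ (r⁻¹ * p)), memℓp_gen' (key ξ)⟩
      map_add' := fun x y => by
        ext p
        exact map_add (e p) _ _
      map_smul' := fun c x => by
        ext p
        exact map_smul (e p) _ _ }
  refine ⟨L.mkContinuous C fun ξ => ?_, fun ξ p => rfl, L.mkContinuous_norm_le hC _⟩
  exact lp.norm_le_of_forall_sum_le h2 (mul_nonneg hC (norm_nonneg _)) (key ξ)

theorem stmt_7 {G : Type*} [Group G] {H : Type*} [NormedAddCommGroup H]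
    [InnerProductSpace ℂ H] [CompleteSpace H]
    (F : Finset G) (d : G → G → (H →L[ℂ] H))
    (hd : ∀ r ∈ F, BddAbove (Set.range fun p : G => ‖d r p‖)) :
    ∃ T : lp (fun _ : G => H) 2 →L[ℂ] lp (fun _ : G => H) 2,
      (∀ (ξ : lp (fun _ : G => H) 2) (p : G),
        (T ξ : ∀ _ : G, H) p = ∑ r ∈ F, d r p (ξ (r⁻¹ * p))) ∧
      ‖T‖ ≤ ∑ r ∈ F, ⨆ p : G, ‖d r p‖ := by
  classical
  have h : ∀ r : G, ∃ T : lp (fun _ : G => H) 2 →L[ℂ] lp (fun _ : G => H) 2, r ∈ F →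
      (∀ (ξ : lp (fun _ : G => H) 2) (p : G),
        (T ξ : ∀ _ : G, H) p = d r p (ξ (r⁻¹ * p))) ∧ ‖T‖ ≤ ⨆ p : G, ‖d r p‖ := by
    intro r
    by_cases hr : r ∈ F
    · obtain ⟨T, hT⟩ := stmt_7_aux r (d r) (⨆ p : G, ‖d r p‖)
        (Real.iSup_nonneg fun p => norm_nonneg _) (fun p => le_ciSup (hd r hr) p)
      exact ⟨T, fun _ => hT⟩
    · exact ⟨0, fun h => absurd h hr⟩
  choose T hT using h
  refine ⟨∑ r ∈ F, T r, fun ξ p => ?_, norm_sum_le_of_le _ fun r hr => (hT r hr).2⟩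
  rw [ContinuousLinearMap.sum_apply, lp.coeFn_sum, Finset.sum_apply]
  exact Finset.sum_congr rfl fun r hr => (hT r hr).1 ξ p
end

section
/- Let a : G → A be finitely supported and set x := ∑_{s ∈ supp a} π(a(s)) ∘ λ_s, a bounded operator on ℓ²(G,H). Then for every r ∈ G one has ‖u(a(r))‖ ≤ ‖x‖ (the Fourier coefficients of a finite sum in the crossed product are dominated in norm by the operator norm of the sum). -/
theorem stmt_8 {G : Type*} [Group G] {H : Type*} [NormedAddCommGroup H]
    [InnerProductSpace ℂ H] [CompleteSpace H]
    {A : Type*} [NormedRing A] [StarRing A] [CStarRing A] [NormedAlgebra ℂ A]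
    [StarModule ℂ A] [CompleteSpace A]
    (u : A →⋆ₐ[ℂ] (H →L[ℂ] H)) (α : G → (A ≃⋆ₐ[ℂ] A))
    (hα : ∀ (g h : G) (a : A), α (g * h) a = α g (α h a))
    (lam : G → (lp (fun _ : G => H) 2 →L[ℂ] lp (fun _ : G => H) 2))
    (hlam : ∀ (r : G) (ξ : lp (fun _ : G => H) 2) (s : G),
      (lam r ξ : ∀ _ : G, H) s = ξ (r⁻¹ * s))
    (π : A → (lp (fun _ : G => H) 2 →L[ℂ] lp (fun _ : G => H) 2))
    (hπ : ∀ (a : A) (ξ : lp (fun _ : G => H) 2) (s : G),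
      (π a ξ : ∀ _ : G, H) s = u (α s⁻¹ a) (ξ s))
    (a : G →₀ A) :
    ∀ r : G, ‖u (a r)‖ ≤ ‖∑ s ∈ a.support, π (a s) ∘L lam s‖ := by
  classical
  intro r
  have h1 : ∀ b : A, α 1 b = b := fun b => by
    have h := hα 1 1 b
    rw [one_mul] at h
    exact ((α 1).injective h).symm
  refine ContinuousLinearMap.opNorm_le_bound _ (norm_nonneg _) fun v => ?_
  set x := ∑ s ∈ a.support, π (a s) ∘L lam s with hx
  have hco : ∀ (t : Finset G) (f : G → lp (fun _ : G => H) 2) (g : G),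
      ((∑ s ∈ t, f s : lp (fun _ : G => H) 2) : ∀ _ : G, H) g
        = ∑ s ∈ t, (f s : ∀ _ : G, H) g := by
    intro t f g
    rw [lp.coeFn_sum, Finset.sum_apply]
  have key : (x (lp.single 2 r⁻¹ v) : ∀ _ : G, H) 1 = u (a r) v := by
    rw [hx, ContinuousLinearMap.sum_apply, hco]
    rw [Finset.sum_eq_single r]
    · rw [ContinuousLinearMap.comp_apply, hπ, hlam, inv_one, h1, mul_one, lp.single_apply_self]
    · intro s _ hs
      rw [ContinuousLinearMap.comp_apply, hπ, hlam, mul_one, lp.single_apply_ne, map_zero]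
      exact fun h => hs (inv_injective h)
    · intro hr
      rw [Finsupp.notMem_support_iff] at hr
      rw [ContinuousLinearMap.comp_apply, hπ, hr, map_zero, map_zero]
      rfl
  rw [← key]
  have hn : ‖(lp.single 2 r⁻¹ v : lp (fun _ : G => H) 2)‖ = ‖v‖ :=
    lp.norm_single (E := fun _ : G => H) (p := 2) (by norm_num) r⁻¹ v
  have e1 := lp.norm_apply_le_norm (E := fun _ : G => H) (p := 2) (by norm_num)
    (x (lp.single 2 r⁻¹ v)) 1
  have e2 := x.le_opNorm (lp.single 2 r⁻¹ v)
  rw [hn] at e2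
  exact e1.trans e2
end

section
/- Let H be a complex Hilbert space, F a finite type, a, b, c : F → B(H), and ε ≥ 0 with ‖b(p)‖ ≤ ε for all p ∈ F. Then for all ξ, η ∈ H: |⟪(∑_{p ∈ F} (a(p))* ∘ b(p) ∘ c(p)) ξ, η⟫| ≤ ε · ⟪(∑_{p ∈ F} (c(p))* ∘ c(p)) ξ, ξ⟫^{1/2} · ⟪(∑_{p ∈ F} (a(p))* ∘ a(p)) η, η⟫^{1/2}. Consequently ‖∑_{p ∈ F} (a(p))* ∘ b(p) ∘ c(p)‖ ≤ ε · ‖∑_{p ∈ F} (c(p))* ∘ c(p)‖^{1/2} · ‖∑_{p ∈ F} (a(p))* ∘ a(p)‖^{1/2}. -/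
open scoped InnerProductSpace

theorem aux_sq {H : Type*} [NormedAddCommGroup H] [InnerProductSpace ℂ H]
    [CompleteSpace H] {F : Type*} [Fintype F] (c : F → (H →L[ℂ] H)) (ξ : H) :
    (⟪(∑ p : F, (ContinuousLinearMap.adjoint (c p)) ∘L (c p)) ξ, ξ⟫_ℂ).re
      = ∑ p : F, ‖c p ξ‖ ^ 2 := by
  rw [ContinuousLinearMap.sum_apply, sum_inner, Complex.re_sum]
  refine Finset.sum_congr rfl fun p _ => ?_
  rw [ContinuousLinearMap.comp_apply, ContinuousLinearMap.adjoint_inner_left]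
  exact inner_self_eq_norm_sq (𝕜 := ℂ) (c p ξ)

theorem aux_sqrt {H : Type*} [NormedAddCommGroup H] [InnerProductSpace ℂ H]
    (T : H →L[ℂ] H) (ξ : H) :
    Real.sqrt (⟪T ξ, ξ⟫_ℂ).re ≤ Real.sqrt ‖T‖ * ‖ξ‖ := by
  have h : (⟪T ξ, ξ⟫_ℂ).re ≤ ‖T‖ * ‖ξ‖ ^ 2 := by
    calc (⟪T ξ, ξ⟫_ℂ).re ≤ ‖⟪T ξ, ξ⟫_ℂ‖ := Complex.re_le_norm _
      _ ≤ ‖T ξ‖ * ‖ξ‖ := norm_inner_le_norm _ _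
      _ ≤ (‖T‖ * ‖ξ‖) * ‖ξ‖ := by gcongr; exact T.le_opNorm ξ
      _ = _ := by ring
  refine (Real.sqrt_le_sqrt h).trans ?_
  rw [Real.sqrt_mul (norm_nonneg _), Real.sqrt_sq (norm_nonneg _)]

theorem stmt_9 {H : Type*} [NormedAddCommGroup H] [InnerProductSpace ℂ H]
    [CompleteSpace H] {F : Type*} [Fintype F]
    (a b c : F → (H →L[ℂ] H)) (ε : ℝ) (hε : 0 ≤ ε)
    (hb : ∀ p : F, ‖b p‖ ≤ ε) :
    (∀ ξ η : H,
      ‖⟪(∑ p : F, (ContinuousLinearMap.adjoint (a p)) ∘L (b p) ∘L (c p)) ξ, η⟫_ℂ‖ ≤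
        ε * Real.sqrt (⟪(∑ p : F, (ContinuousLinearMap.adjoint (c p)) ∘L (c p)) ξ, ξ⟫_ℂ).re
          * Real.sqrt (⟪(∑ p : F, (ContinuousLinearMap.adjoint (a p)) ∘L (a p)) η, η⟫_ℂ).re) ∧
    ‖∑ p : F, (ContinuousLinearMap.adjoint (a p)) ∘L (b p) ∘L (c p)‖ ≤
      ε * ‖∑ p : F, (ContinuousLinearMap.adjoint (c p)) ∘L (c p)‖ ^ ((1 : ℝ) / 2)
        * ‖∑ p : F, (ContinuousLinearMap.adjoint (a p)) ∘L (a p)‖ ^ ((1 : ℝ) / 2) := by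
  have key : ∀ ξ η : H,
      ‖⟪(∑ p : F, (ContinuousLinearMap.adjoint (a p)) ∘L (b p) ∘L (c p)) ξ, η⟫_ℂ‖ ≤
        ε * Real.sqrt (⟪(∑ p : F, (ContinuousLinearMap.adjoint (c p)) ∘L (c p)) ξ, ξ⟫_ℂ).re
          * Real.sqrt
            (⟪(∑ p : F, (ContinuousLinearMap.adjoint (a p)) ∘L (a p)) η, η⟫_ℂ).re := by
    intro ξ η
    rw [aux_sq, aux_sq, ContinuousLinearMap.sum_apply, sum_inner, mul_assoc]
    calc _ ≤ ∑ p : F, ε * (‖c p ξ‖ * ‖a p η‖) := by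
          refine norm_sum_le_of_le _ fun p _ => ?_
          rw [ContinuousLinearMap.comp_apply, ContinuousLinearMap.adjoint_inner_left,
            ContinuousLinearMap.comp_apply]
          refine (norm_inner_le_norm _ _).trans ?_
          rw [← mul_assoc]
          gcongr
          exact (b p).le_of_opNorm_le (hb p) _
      _ ≤ _ := by
          rw [← Finset.mul_sum]
          gcongr
          exact Real.sum_mul_le_sqrt_mul_sqrt _ _ _
  refine ⟨key, ?_⟩
  rw [← Real.sqrt_eq_rpow, ← Real.sqrt_eq_rpow]
  refine ContinuousLinearMap.opNorm_le_bound _ (by positivity) fun ξ => ?_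
  set T := ∑ p : F, (ContinuousLinearMap.adjoint (a p)) ∘L (b p) ∘L (c p) with hT
  rcases (norm_nonneg (T ξ)).eq_or_lt with h0 | h0
  · rw [← h0]; positivity
  refine le_of_mul_le_mul_right ?_ h0
  calc ‖T ξ‖ * ‖T ξ‖ = ‖⟪T ξ, T ξ⟫_ℂ‖ := by
        rw [inner_self_eq_norm_sq_to_K]; simp [sq]
    _ ≤ _ := key ξ (T ξ)
    _ ≤ ε * (Real.sqrt ‖∑ p : F, (ContinuousLinearMap.adjoint (c p)) ∘L (c p)‖ * ‖ξ‖)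
        * (Real.sqrt ‖∑ p : F, (ContinuousLinearMap.adjoint (a p)) ∘L (a p)‖ * ‖T ξ‖) := by
        gcongr
        · exact aux_sqrt _ _
        · exact aux_sqrt _ _
    _ = _ := by ring
end

section
/- Let X be a type, H and K complex Hilbert spaces, V, W : X → (H →L K) families of operators whose norms are bounded above, and m : X × X → B(K) with (x,y) ↦ ‖m(x,y)‖² summable. Set k(x,y) := (V(x))* ∘ m(x,y) ∘ W(y) for x, y ∈ X. Suppose T_m is a bounded operator on ℓ²(X,K) with (T_m ζ)(x) = ∑'_y m(x,y)(ζ(y)), T_k is a bounded operator on ℓ²(X,H) with (T_k ξ)(x) = ∑'_y k(x,y)(ξ(y)), and D_V, D_W : ℓ²(X,H) → ℓ²(X,K) are bounded operators with (D_V ξ)(x) = V(x)(ξ(x)) and (D_W ξ)(x) = W(x)(ξ(x)). Then T_k = (D_V)* ∘ T_m ∘ D_W, and consequently ‖T_k‖ ≤ (⨆_x ‖V(x)‖) · (⨆_y ‖W(y)‖) · ‖T_m‖. -/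
theorem aux_DV_norm {X : Type*} {H K : Type*}
    [NormedAddCommGroup H] [InnerProductSpace ℂ H]
    [NormedAddCommGroup K] [InnerProductSpace ℂ K]
    (V : X → (H →L[ℂ] K))
    (hV : BddAbove (Set.range fun x : X => ‖V x‖))
    (DV : lp (fun _ : X => H) 2 →L[ℂ] lp (fun _ : X => K) 2)
    (hDV : ∀ (ξ : lp (fun _ : X => H) 2) (x : X), (DV ξ : ∀ _ : X, K) x = V x (ξ x)) :
    ‖DV‖ ≤ ⨆ x : X, ‖V x‖ := by
  have h0 : 0 ≤ ⨆ x : X, ‖V x‖ := Real.iSup_nonneg fun x => norm_nonneg _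
  have h2 : 0 < (2 : ENNReal).toReal := by norm_num
  refine ContinuousLinearMap.opNorm_le_bound _ h0 fun ξ => ?_
  refine lp.norm_le_of_forall_sum_le h2 (by positivity) fun s => ?_
  rw [Real.mul_rpow h0 (norm_nonneg _)]
  refine le_trans ?_ (mul_le_mul_of_nonneg_left (lp.sum_rpow_le_norm_rpow h2 ξ s) (by positivity))
  rw [Finset.mul_sum]
  refine Finset.sum_le_sum fun x _ => ?_
  rw [← Real.mul_rpow h0 (norm_nonneg _), hDV]
  refine Real.rpow_le_rpow (norm_nonneg _) ?_ h2.le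
  exact (V x).le_of_opNorm_le (le_ciSup hV x) _

theorem aux_adj {X : Type*} {H K : Type*}
    [NormedAddCommGroup H] [InnerProductSpace ℂ H] [CompleteSpace H]
    [NormedAddCommGroup K] [InnerProductSpace ℂ K] [CompleteSpace K]
    (V : X → (H →L[ℂ] K))
    (DV : lp (fun _ : X => H) 2 →L[ℂ] lp (fun _ : X => K) 2)
    (hDV : ∀ (ξ : lp (fun _ : X => H) 2) (x : X), (DV ξ : ∀ _ : X, K) x = V x (ξ x))
    (η : lp (fun _ : X => K) 2) (x : X) :
    (ContinuousLinearMap.adjoint DV η : ∀ _ : X, H) x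
      = ContinuousLinearMap.adjoint (V x) (η x) := by
  classical
  refine ext_inner_left ℂ fun a => ?_
  have hs : DV (lp.single 2 x a) = lp.single 2 x (V x a) := by
    apply lp.ext
    funext y
    rw [hDV]
    by_cases h : y = x
    · subst h; simp
    · rw [lp.single_apply_ne _ _ _ h, lp.single_apply_ne _ _ _ h, map_zero]
  have e1 := lp.inner_single_left (𝕜 := ℂ) (G := fun _ : X => H) x a
    (ContinuousLinearMap.adjoint DV η)
  have e2 := lp.inner_single_left (𝕜 := ℂ) (G := fun _ : X => K) x (V x a) η
  rw [ContinuousLinearMap.adjoint_inner_right, hs] at e1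
  exact (e1.symm.trans e2).trans (ContinuousLinearMap.adjoint_inner_right (V x) a (η x)).symm

theorem stmt_10 {X : Type*} {H K : Type*}
    [NormedAddCommGroup H] [InnerProductSpace ℂ H] [CompleteSpace H]
    [NormedAddCommGroup K] [InnerProductSpace ℂ K] [CompleteSpace K]
    (V W : X → (H →L[ℂ] K))
    (hV : BddAbove (Set.range fun x : X => ‖V x‖))
    (hW : BddAbove (Set.range fun x : X => ‖W x‖))
    (m : X × X → (K →L[ℂ] K))
    (hm : Summable fun p : X × X => ‖m p‖ ^ 2)
    (k : X × X → (H →L[ℂ] H))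
    (hk : ∀ x y : X,
      k (x, y) = (ContinuousLinearMap.adjoint (V x)) ∘L (m (x, y)) ∘L (W y))
    (Tm : lp (fun _ : X => K) 2 →L[ℂ] lp (fun _ : X => K) 2)
    (hTm : ∀ (ζ : lp (fun _ : X => K) 2) (x : X),
      (Tm ζ : ∀ _ : X, K) x = ∑' y : X, m (x, y) (ζ y))
    (Tk : lp (fun _ : X => H) 2 →L[ℂ] lp (fun _ : X => H) 2)
    (hTk : ∀ (ξ : lp (fun _ : X => H) 2) (x : X),
      (Tk ξ : ∀ _ : X, H) x = ∑' y : X, k (x, y) (ξ y))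
    (DV DW : lp (fun _ : X => H) 2 →L[ℂ] lp (fun _ : X => K) 2)
    (hDV : ∀ (ξ : lp (fun _ : X => H) 2) (x : X), (DV ξ : ∀ _ : X, K) x = V x (ξ x))
    (hDW : ∀ (ξ : lp (fun _ : X => H) 2) (x : X), (DW ξ : ∀ _ : X, K) x = W x (ξ x)) :
    Tk = (ContinuousLinearMap.adjoint DV) ∘L Tm ∘L DW ∧
      ‖Tk‖ ≤ (⨆ x : X, ‖V x‖) * (⨆ y : X, ‖W y‖) * ‖Tm‖ := by
  have h2 : 0 < (2 : ENNReal).toReal := by norm_num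
  have hEq : Tk = (ContinuousLinearMap.adjoint DV) ∘L Tm ∘L DW := by
    ext ξ x
    have hsum : Summable fun y => m (x, y) ((DW ξ : ∀ _ : X, K) y) := by
      have h1 : Summable fun y => ‖m (x, y)‖ ^ 2 :=
        hm.comp_injective (i := fun y => (x, y)) (Prod.mk_right_injective x)
      have h3 : Summable fun y => ‖(DW ξ : ∀ _ : X, K) y‖ ^ 2 := by
        simpa using (lp.hasSum_norm h2 (DW ξ)).summable
      refine Summable.of_norm_bounded (h1.add h3) fun y => ?_
      refine ((m (x, y)).le_opNorm _).trans ?_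
      nlinarith [sq_nonneg (‖m (x, y)‖ - ‖(DW ξ : ∀ _ : X, K) y‖),
        sq_nonneg (‖m (x, y)‖), sq_nonneg (‖(DW ξ : ∀ _ : X, K) y‖)]
    rw [ContinuousLinearMap.comp_apply, ContinuousLinearMap.comp_apply,
      aux_adj V DV hDV, hTm, hTk, ContinuousLinearMap.map_tsum _ hsum]
    refine tsum_congr fun y => ?_
    rw [hk, hDW]
    rfl
  refine ⟨hEq, ?_⟩
  have hv := aux_DV_norm V hV DV hDV
  have hw := aux_DV_norm W hW DW hDW
  have hv0 := (norm_nonneg DV).trans hv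
  have ha : ‖ContinuousLinearMap.adjoint DV‖ = ‖DV‖ := LinearIsometryEquiv.norm_map _ _
  calc ‖Tk‖ ≤ ‖ContinuousLinearMap.adjoint DV‖ * (‖Tm‖ * ‖DW‖) := by
        rw [hEq]
        refine (ContinuousLinearMap.opNorm_comp_le _ _).trans ?_
        gcongr
        exact ContinuousLinearMap.opNorm_comp_le _ _
    _ ≤ (⨆ x : X, ‖V x‖) * (‖Tm‖ * (⨆ y : X, ‖W y‖)) := by
        rw [ha]; gcongr
    _ = _ := by ring
end

section
/- Let d be a natural number and for k = 1,…,d let p_k, q_k ∈ G, ξ_k, η_k ∈ H, and y_k ∈ B(ℓ²(G,H)). Define θ : B(ℓ²(G,H)) → B(ℓ²(G,H)) by θ(x) = ∑_{k=1}^d ⟪x(δ_{p_k} ⊗ ξ_k), δ_{q_k} ⊗ η_k⟫ • y_k. Then for every a ∈ A and r ∈ G such that r ≠ q_k · p_k⁻¹ for all k = 1,…,d, one has θ(π(a) ∘ λ_r) = 0. -/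
open scoped InnerProductSpace

theorem stmt_12 {G : Type*} [Group G] [DecidableEq G] {H : Type*} [NormedAddCommGroup H]
    [InnerProductSpace ℂ H] [CompleteSpace H]
    {A : Type*} [NormedRing A] [StarRing A] [CStarRing A] [NormedAlgebra ℂ A]
    [StarModule ℂ A] [CompleteSpace A]
    (u : A →⋆ₐ[ℂ] (H →L[ℂ] H)) (α : G → (A ≃⋆ₐ[ℂ] A))
    (hα : ∀ (g h : G) (a : A), α (g * h) a = α g (α h a))
    (lam : G → (lp (fun _ : G => H) 2 →L[ℂ] lp (fun _ : G => H) 2))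
    (hlam : ∀ (r : G) (ξ : lp (fun _ : G => H) 2) (s : G),
      (lam r ξ : ∀ _ : G, H) s = ξ (r⁻¹ * s))
    (π : A → (lp (fun _ : G => H) 2 →L[ℂ] lp (fun _ : G => H) 2))
    (hπ : ∀ (a : A) (ξ : lp (fun _ : G => H) 2) (s : G),
      (π a ξ : ∀ _ : G, H) s = u (α s⁻¹ a) (ξ s))
    (d : ℕ) (p q : Fin d → G) (ξ η : Fin d → H)
    (y : Fin d → (lp (fun _ : G => H) 2 →L[ℂ] lp (fun _ : G => H) 2))
    (θ : (lp (fun _ : G => H) 2 →L[ℂ] lp (fun _ : G => H) 2) →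
          (lp (fun _ : G => H) 2 →L[ℂ] lp (fun _ : G => H) 2))
    (hθ : ∀ x : lp (fun _ : G => H) 2 →L[ℂ] lp (fun _ : G => H) 2,
      θ x = ∑ k : Fin d,
        ⟪x (lp.single 2 (p k) (ξ k)), lp.single 2 (q k) (η k)⟫_ℂ • y k) :
    ∀ (a : A) (r : G), (∀ k : Fin d, r ≠ q k * (p k)⁻¹) →
      θ (π a ∘L lam r) = 0 := by
  intro a r hr
  rw [hθ]
  refine Finset.sum_eq_zero fun k _ => ?_
  have hne : r⁻¹ * q k ≠ p k := by
    intro h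
    apply hr k
    rw [← h]
    group
  rw [lp.inner_single_right, ContinuousLinearMap.comp_apply, hπ, hlam,
    lp.single_apply_ne _ _ _ hne, map_zero, inner_zero_left, zero_smul]
end

section
/- Let W : ℓ²(G,H) → ℓ²(G×G,H) be defined by (W ξ)(p,q) = ξ(q) if p = q and (W ξ)(p,q) = 0 if p ≠ q. Then (a) W is a well-defined linear isometry; and (b) for every a ∈ A and r ∈ G, if Δ is a bounded operator on ℓ²(G×G,H) satisfying (Δ ζ)(p,q) = u(α(q⁻¹)(a))(ζ(r⁻¹ p, r⁻¹ q)) for all ζ, p, q (the operator λ_r ⊗ π(a)λ_r), then W* ∘ Δ ∘ W = π(a) ∘ λ_r. -/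
theorem diag_hasSum_aux {G : Type*} [DecidableEq G] {H : Type*} [NormedAddCommGroup H]
    (f : G → H) (c : ℝ) :
    HasSum (fun x : G × G => ‖(if x.1 = x.2 then f x.2 else 0 : H)‖ ^ (2 : ENNReal).toReal) c ↔
      HasSum (fun s : G => ‖f s‖ ^ (2 : ENNReal).toReal) c := by
  have hinj : Function.Injective (fun s : G => (s, s)) := fun a b h => (Prod.ext_iff.1 h).1
  rw [← hinj.hasSum_iff]
  · simp [Function.comp_def]
  · rintro ⟨p, q⟩ hx
    have : p ≠ q := by
      rintro rfl
      exact hx ⟨p, rfl⟩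
    simp [this]

theorem stmt_13 {G : Type*} [Group G] [DecidableEq G] {H : Type*} [NormedAddCommGroup H]
    [InnerProductSpace ℂ H] [CompleteSpace H]
    {A : Type*} [NormedRing A] [StarRing A] [CStarRing A] [NormedAlgebra ℂ A]
    [StarModule ℂ A] [CompleteSpace A]
    (u : A →⋆ₐ[ℂ] (H →L[ℂ] H)) (α : G → (A ≃⋆ₐ[ℂ] A))
    (hα : ∀ (g h : G) (a : A), α (g * h) a = α g (α h a))
    (lam : G → (lp (fun _ : G => H) 2 →L[ℂ] lp (fun _ : G => H) 2))
    (hlam : ∀ (r : G) (ξ : lp (fun _ : G => H) 2) (s : G),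
      (lam r ξ : ∀ _ : G, H) s = ξ (r⁻¹ * s))
    (π : A → (lp (fun _ : G => H) 2 →L[ℂ] lp (fun _ : G => H) 2))
    (hπ : ∀ (a : A) (ξ : lp (fun _ : G => H) 2) (s : G),
      (π a ξ : ∀ _ : G, H) s = u (α s⁻¹ a) (ξ s)) :
    ∃ W : lp (fun _ : G => H) 2 →L[ℂ] lp (fun _ : G × G => H) 2,
      (∀ (ξ : lp (fun _ : G => H) 2) (p q : G),
        (W ξ : ∀ _ : G × G, H) (p, q) = if p = q then ξ q else 0) ∧
      Isometry W ∧
      (∀ (a : A) (r : G)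
        (Δ : lp (fun _ : G × G => H) 2 →L[ℂ] lp (fun _ : G × G => H) 2),
        (∀ (ζ : lp (fun _ : G × G => H) 2) (p q : G),
          (Δ ζ : ∀ _ : G × G, H) (p, q) = u (α q⁻¹ a) (ζ (r⁻¹ * p, r⁻¹ * q))) →
        (ContinuousLinearMap.adjoint W) ∘L Δ ∘L W = π a ∘L lam r) := by
  have h2 : 0 < (2 : ENNReal).toReal := by norm_num
  have hmem : ∀ ξ : lp (fun _ : G => H) 2,
      Memℓp (fun x : G × G => (if x.1 = x.2 then ξ x.2 else 0 : H)) 2 := by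
    intro ξ
    exact memℓp_gen ((diag_hasSum_aux (ξ : G → H) _).2 (lp.hasSum_norm h2 ξ)).summable
  let L : lp (fun _ : G => H) 2 →ₗ[ℂ] lp (fun _ : G × G => H) 2 :=
    { toFun := fun ξ => ⟨fun x => if x.1 = x.2 then ξ x.2 else 0, hmem ξ⟩
      map_add' := by
        intro ξ η
        ext x
        change (if x.1 = x.2 then ξ x.2 + η x.2 else 0 : H) =
          (if x.1 = x.2 then ξ x.2 else 0) + (if x.1 = x.2 then η x.2 else 0)
        by_cases h : x.1 = x.2 <;> simp [h]
      map_smul' := by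
        intro c ξ
        ext x
        by_cases h : x.1 = x.2 <;> simp [h] }
  have hL : ∀ ξ, ‖L ξ‖ = ‖ξ‖ := by
    intro ξ
    have e1 := (diag_hasSum_aux (ξ : G → H) _).1 (lp.hasSum_norm h2 (L ξ))
    have e2 := e1.unique (lp.hasSum_norm h2 ξ)
    exact (Real.rpow_left_inj (norm_nonneg _) (norm_nonneg _) h2.ne').1 e2
  let I : lp (fun _ : G => H) 2 →ₗᵢ[ℂ] lp (fun _ : G × G => H) 2 := ⟨L, hL⟩
  have hI : ∀ (ξ : lp (fun _ : G => H) 2) (p q : G),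
      (I.toContinuousLinearMap ξ : ∀ _ : G × G, H) (p, q) = if p = q then ξ q else 0 :=
    fun ξ p q => rfl
  refine ⟨I.toContinuousLinearMap, hI, I.isometry, ?_⟩
  intro a r Δ hΔ
  have key : Δ ∘L I.toContinuousLinearMap = I.toContinuousLinearMap ∘L (π a ∘L lam r) := by
    ext ξ x
    obtain ⟨p, q⟩ := x
    simp only [ContinuousLinearMap.comp_apply]
    rw [hΔ, hI, hI, hπ, hlam]
    by_cases h : p = q <;> simp [h]
  rw [key, ← ContinuousLinearMap.comp_assoc]
  rw [(ContinuousLinearMap.norm_map_iff_adjoint_comp_self I.toContinuousLinearMap).1 hL]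
  rfl
end

section
/- Assume u is injective (so that u, and hence π, is isometric). Let a : G → A and v : G → ℂ be finitely supported functions and Φ : A → A a bounded linear map. Then ‖∑_{s ∈ supp v} v(s) • (π(Φ(a(s))) ∘ λ_s)‖ ≤ (⨆_{s} |v(s)|) · ‖Φ‖ · (supp v).card · ‖∑_{s ∈ supp a} π(a(s)) ∘ λ_s‖. -/
theorem stmt_15 {G : Type*} [Group G] {H : Type*} [NormedAddCommGroup H]
    [InnerProductSpace ℂ H] [CompleteSpace H]
    {A : Type*} [NormedRing A] [StarRing A] [CStarRing A] [NormedAlgebra ℂ A]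
    [StarModule ℂ A] [CompleteSpace A]
    (u : A →⋆ₐ[ℂ] (H →L[ℂ] H)) (hu : Function.Injective u)
    (α : G → (A ≃⋆ₐ[ℂ] A))
    (hα : ∀ (g h : G) (a : A), α (g * h) a = α g (α h a))
    (lam : G → (lp (fun _ : G => H) 2 →L[ℂ] lp (fun _ : G => H) 2))
    (hlam : ∀ (r : G) (ξ : lp (fun _ : G => H) 2) (s : G),
      (lam r ξ : ∀ _ : G, H) s = ξ (r⁻¹ * s))
    (π : A → (lp (fun _ : G => H) 2 →L[ℂ] lp (fun _ : G => H) 2))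
    (hπ : ∀ (a : A) (ξ : lp (fun _ : G => H) 2) (s : G),
      (π a ξ : ∀ _ : G, H) s = u (α s⁻¹ a) (ξ s))
    (a : G →₀ A) (v : G →₀ ℂ) (Φ : A →L[ℂ] A) :
    ‖∑ s ∈ v.support, v s • (π (Φ (a s)) ∘L lam s)‖ ≤
      (⨆ s : G, ‖v s‖) * ‖Φ‖ * (v.support.card : ℝ) *
        ‖∑ s ∈ a.support, π (a s) ∘L lam s‖ := by
  classical
  letI : CStarAlgebra A := {}
  have hun : ∀ b : A, ‖u b‖ = ‖b‖ := fun b => NonUnitalStarAlgHom.norm_map u hu b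
  have han : ∀ (g : G) (b : A), ‖α g b‖ = ‖b‖ := fun g b => StarAlgEquiv.norm_map (α g) b
  have hpt : (0 : ℝ) < (2 : ENNReal).toReal := by norm_num
  have hlamn : ∀ r ξ, ‖lam r ξ‖ = ‖ξ‖ := by
    intro r ξ
    have h : ‖lam r ξ‖ ^ (2 : ENNReal).toReal = ‖ξ‖ ^ (2 : ENNReal).toReal := by
      rw [lp.norm_rpow_eq_tsum hpt, lp.norm_rpow_eq_tsum hpt]
      simp_rw [hlam]
      exact (Equiv.mulLeft r⁻¹).tsum_eq (fun s => ‖ξ s‖ ^ (2 : ENNReal).toReal)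
    exact (Real.rpow_left_inj (norm_nonneg _) (norm_nonneg _) hpt.ne').1 h
  have hπn : ∀ b ξ, ‖π b ξ‖ ≤ ‖b‖ * ‖ξ‖ := by
    intro b ξ
    have h : ‖π b ξ‖ ≤ ‖((‖b‖ : ℂ)) • ξ‖ := by
      refine lp.norm_mono (by norm_num) fun i => ?_
      rw [hπ, lp.coeFn_smul, Pi.smul_apply, norm_smul]
      refine ((u _).le_opNorm _).trans ?_
      rw [hun, han]; simp
    rw [norm_smul] at h
    simpa using h
  set T := ∑ s ∈ a.support, π (a s) ∘L lam s with hT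
  have key : ∀ s, ‖a s‖ ≤ ‖T‖ := by
    intro s
    by_cases hs : a s = 0
    · rw [hs, norm_zero]; exact norm_nonneg _
    rw [← han s⁻¹, ← hun]
    refine ContinuousLinearMap.opNorm_le_bound _ (norm_nonneg _) fun x => ?_
    have h1 : (T (lp.single 2 1 x) : ∀ _ : G, H) s = u (α s⁻¹ (a s)) x := by
      rw [hT, ContinuousLinearMap.sum_apply, lp.coeFn_sum, Finset.sum_apply,
        Finset.sum_eq_single s]
      · rw [ContinuousLinearMap.comp_apply, hπ, hlam, inv_mul_cancel, lp.single_apply_self]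
      · intro t _ hts
        rw [ContinuousLinearMap.comp_apply, hπ, hlam, lp.single_apply_ne, map_zero]
        intro h
        exact hts (inv_mul_eq_one.1 h)
      · intro h; exact absurd (Finsupp.notMem_support_iff.1 h) hs
    rw [← h1]
    refine (lp.norm_apply_le_norm (by norm_num) _ s).trans ((T.le_opNorm _).trans ?_)
    rw [lp.norm_single (by norm_num)]
  have hbdd : BddAbove (Set.range fun s : G => ‖v s‖) := by
    refine ((v.finite_range.image norm).subset ?_).bddAbove
    rintro _ ⟨s, rfl⟩
    exact ⟨v s, ⟨s, rfl⟩, rfl⟩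
  have hterm : ∀ s ∈ v.support, ‖v s • (π (Φ (a s)) ∘L lam s)‖ ≤
      (⨆ s : G, ‖v s‖) * (‖Φ‖ * ‖T‖) := by
    intro s _
    rw [norm_smul]
    refine mul_le_mul (le_ciSup hbdd s) ?_ (norm_nonneg _)
      ((norm_nonneg _).trans (le_ciSup hbdd s))
    refine ContinuousLinearMap.opNorm_le_bound _ (by positivity) fun ξ => ?_
    rw [ContinuousLinearMap.comp_apply]
    refine (hπn _ _).trans ?_
    rw [hlamn]
    gcongr
    exact (Φ.le_opNorm _).trans (by gcongr; exact key s)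
  refine (norm_sum_le_of_le _ hterm).trans (le_of_eq ?_)
  rw [Finset.sum_const, nsmul_eq_mul]
  ring
end
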